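/- arXiv:2012.03056 — 3 statements merged into one kernel-verified Lean document; each statement's English description precedes it below -/
import Mathlib

section
/- Let I be a nonzero ideal of the order R = 𝒪_f in a quadratic number field, and let f' | f be such that the multiplier ring ϱ(I) = {x ∈ K : xI ⊆ I} equals 𝒪_{f'}. Then Fitt₁(I) = I·I⁻¹ = ℤ(f/f') + ℤfω = (R : ϱ(I)), and R/Fitt₁(I) is isomorphic as a ring to ℤ/(f/f')ℤ. -/
/-- The second Fitting ideal of a two-generated ideal, computed from the generating pair
`(a, b)`: the ideal generated by all coefficients involved in a relation
`r * a + s * b = 0`. -/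
def relFittingIdeal {R : Type*} [CommRing R] (a b : R) : Ideal R :=
  Ideal.span {r : R | (∃ s, r * a + s * b = 0) ∨ (∃ s, s * a + r * b = 0)}

/-!
Write `J` for the lattice `I` inside `K`, so that `ϱ(I) = J / J` and `I⁻¹ = 1 / J`. The relations
`r * a + s * b = 0` are exactly those with `r = x * b`, `s = -(x * a)` for some `x ∈ 1 / J`, whence
`Fitt₁(I) = J * (1 / J)`. If `σ` is the conjugation of the order, the coefficients of
`(a + bX)(σ a + σ b X)` are rational integers; after division by their gcd `c`, Gauss's lemma in the
form of Dedekind shows that `c⁻¹ σ(J)` is an inverse of `J` over `J / J`. Cancelling it gives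
`J * (1 / J) = 1 / (J / J)`, which is the conductor of `ϱ(I) = ℤ + ℤθ` in `R = ℤ + ℤgθ`, where
`θ = f'ω` and `g = f / f'`; since `1, θ` is a basis of `ϱ(I)`, the conductor is `gϱ(I)`.
-/

open Submodule IsLocalization

section MultiplierRing

variable {R K : Type*} [CommSemiring R] [CommSemiring K] [Algebra R K]

theorem mul_one_div_le_one_div_div_self (J : Submodule R K) : J * (1 / J) ≤ 1 / (J / J) :=
  le_div_iff_mul_le.2 <| calc
    J * (1 / J) * (J / J) = J / J * J * (1 / J) := by ring
    _ ≤ J * (1 / J) := by gcongr; exact le_div_iff_mul_le.1 le_rfl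
    _ ≤ 1 := mul_one_div_le_one

theorem mul_one_div_eq_one_div_div_self {J L : Submodule R K} (h : J * L = J / J) :
    J * (1 / J) = 1 / (J / J) := by
  refine (mul_one_div_le_one_div_div_self J).antisymm ?_
  have one_le_mul : 1 ≤ J * L := h ▸ one_le.2 (one_mem_div.2 le_rfl)
  have mul_le_one_div : 1 / (J / J) * L ≤ 1 / J := le_div_iff_mul_le.2 <| calc
    1 / (J / J) * L * J = 1 / (J / J) * (J / J) := by rw [← h]; ring
    _ ≤ 1 := le_div_iff_mul_le.1 le_rfl
  calc
    1 / (J / J) = 1 / (J / J) * 1 := (mul_one _).symm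
    _ ≤ 1 / (J / J) * (J * L) := by gcongr
    _ = J * (1 / (J / J) * L) := by ring
    _ ≤ J * (1 / J) := by gcongr

theorem mem_div_span_pair {N : Submodule R K} {a b x : K} :
    x ∈ N / span R {a, b} ↔ x * a ∈ N ∧ x * b ∈ N := by
  refine ⟨fun h ↦ ⟨h _ (subset_span (by simp)), h _ (subset_span (by simp))⟩, ?_⟩
  rintro ⟨ha, hb⟩ y hy
  obtain ⟨r, s, rfl⟩ := mem_span_pair.1 hy
  rw [mul_add, mul_smul_comm, mul_smul_comm]
  exact add_mem (smul_mem _ r ha) (smul_mem _ s hb)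

theorem mem_div_coeSubmodule_iff {N : Submodule R K} {I : Ideal R} {x : K} :
    x ∈ N / coeSubmodule K I ↔ ∀ y ∈ I, x * algebraMap R K y ∈ N := by
  rw [mem_div_iff_forall_mul_mem]
  refine ⟨fun h y hy ↦ h _ (mem_map_of_mem hy), ?_⟩
  rintro h _ ⟨y, hy, rfl⟩
  exact h y hy

theorem coeSubmodule_span_mul_eq_mul_one_div (I : Ideal R) :
    coeSubmodule K (Ideal.span {w : R | ∃ x ∈ 1 / coeSubmodule K I, ∃ y ∈ I,
      algebraMap R K w = x * algebraMap R K y}) = coeSubmodule K I * (1 / coeSubmodule K I) := by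
  rw [coeSubmodule_span, mul_comm, mul_eq_span_mul_set]
  congr 1
  ext z
  constructor
  · rintro ⟨w, ⟨x, hx, y, hy, hw⟩, rfl⟩
    exact ⟨x, hx, algebraMap R K y, mem_map_of_mem hy, hw.symm⟩
  · rintro ⟨x, hx, _, ⟨y, hy, rfl⟩, rfl⟩
    obtain ⟨w, hw⟩ := mem_one.1 (hx _ (mem_map_of_mem hy))
    exact ⟨w, ⟨x, hx, y, hy, hw⟩, hw⟩

end MultiplierRing

section UnitContent

variable {R K : Type*} [CommRing R] [CommRing K] [Algebra R K]

theorem mul_mem_div_self_span_pair {a b a' b' : K} (haa : a * a' ∈ (1 : Submodule R K))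
    (hab : a * b' + b * a' ∈ (1 : Submodule R K)) (hbb : b * b' ∈ (1 : Submodule R K)) :
    a * b' ∈ span R {a, b} / span R {a, b} := by
  set J := span R {a, b}
  have one_mul_mem {c x : K} (hc : c ∈ (1 : Submodule R K)) (hx : x ∈ J) : c * x ∈ J :=
    one_mul J ▸ mul_mem_mul hc hx
  have ha : a ∈ J := subset_span (by simp)
  have hb : b ∈ J := subset_span (by simp)
  refine mem_div_span_pair.2 ⟨?_, ?_⟩
  · convert! sub_mem (one_mul_mem hab ha) (one_mul_mem haa hb) using 1
    ring
  · convert! one_mul_mem hbb ha using 1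
    ring

/- A form of Gauss's lemma: the hypothesis says that the product `(a + bX)(a' + b'X)` has unit
content. -/
theorem span_pair_mul_span_pair_eq_div_self {a b a' b' : K}
    (h : span R {a * a', a * b' + b * a', b * b'} = 1) :
    span R {a, b} * span R {a', b'} = span R {a, b} / span R {a, b} := by
  have hmem {x : K} (hx : x ∈ ({a * a', a * b' + b * a', b * b'} : Set K)) :
      x ∈ (1 : Submodule R K) := h ▸ subset_span hx
  have haa := hmem (x := a * a') (by simp)
  have hab := hmem (x := a * b' + b * a') (by simp)
  have hbb := hmem (x := b * b') (by simp)
  set J := span R {a, b}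
  set L := span R {a', b'}
  have one_le_div : 1 ≤ J / J := one_le.2 (one_mem_div.2 le_rfl)
  have hab' : a * b' ∈ J / J := mul_mem_div_self_span_pair haa hab hbb
  have hba' : b * a' ∈ J / J := by
    convert! sub_mem (one_le_div hab) hab' using 1
    ring
  have one_le_mul : 1 ≤ J * L := by
    have ha : a ∈ J := subset_span (by simp)
    have hb : b ∈ J := subset_span (by simp)
    have ha' : a' ∈ L := subset_span (by simp)
    have hb' : b' ∈ L := subset_span (by simp)
    rw [← h, span_le]
    rintro _ (rfl | rfl | rfl)
    exacts [mul_mem_mul ha ha', add_mem (mul_mem_mul ha hb') (mul_mem_mul hb ha'),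
      mul_mem_mul hb hb']
  apply le_antisymm
  · rw [span_mul_span, span_le]
    rintro _ ⟨x, rfl | rfl, y, rfl | rfl, rfl⟩
    exacts [one_le_div haa, hab', hba', one_le_div hbb]
  · calc
      J / J = J / J * 1 := (mul_one _).symm
      _ ≤ J / J * (J * L) := by gcongr
      _ = J / J * J * L := (mul_assoc _ _ _).symm
      _ ≤ J * L := by gcongr; exact le_div_iff_mul_le.1 le_rfl

end UnitContent

theorem exists_span_pair_mul_eq_div_self {A R K : Type*} [CommRing A] [IsBezout A] [CommRing R]
    [Algebra A R] [Field K] [Algebra A K] [Algebra R K] [IsScalarTower A R K] [FaithfulSMul R K]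
    (σ : R →+ R) (hσ : Function.Injective σ) (hnorm : ∀ x, ∃ c : A, x * σ x = algebraMap A R c)
    {a b : R} (hab : Ideal.span {a, b} ≠ ⊥) :
    ∃ L : Submodule R K, coeSubmodule K (Ideal.span {a, b}) * L =
      coeSubmodule K (Ideal.span {a, b}) / coeSubmodule K (Ideal.span {a, b}) := by
  choose N hN using hnorm
  have htrace : a * σ b + b * σ a = algebraMap A R (N (a + b) - N a - N b) := by
    rw [map_sub, map_sub, ← hN, ← hN, ← hN, map_add]
    ring
  obtain ⟨c, hc⟩ := (IsBezout.isPrincipal_of_FG (Ideal.span {N a, N (a + b) - N a - N b, N b})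
    (fg_span (by simp))).principal
  have hcontent : span R {algebraMap R K (a * σ a), algebraMap R K (a * σ b + b * σ a),
      algebraMap R K (b * σ b)} = span R {algebraMap A K c} := by
    have := congrArg (fun I ↦ coeSubmodule K (Ideal.map (algebraMap A R) I)) hc
    simpa only [Ideal.submodule_span_eq, Ideal.map_span, coeSubmodule_span, Set.image_insert_eq,
      Set.image_singleton, ← hN, ← htrace, ← IsScalarTower.algebraMap_apply] using this
  have hc0 : algebraMap A K c ≠ 0 := by
    intro h0
    have eq_zero {x : R} (hx : algebraMap R K (x * σ x) = 0) : x = 0 := by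
      simpa [map_eq_zero_iff σ hσ] using hx
    rw [h0, span_singleton_eq_bot.2 rfl, span_eq_bot] at hcontent
    have ha : a = 0 := eq_zero (hcontent _ (by simp))
    have hb : b = 0 := eq_zero (hcontent _ (by simp))
    simp [ha, hb] at hab
  refine ⟨span R {(algebraMap A K c)⁻¹ * algebraMap R K (σ a),
    (algebraMap A K c)⁻¹ * algebraMap R K (σ b)}, ?_⟩
  simp only [coeSubmodule_span, Set.image_pair]
  apply span_pair_mul_span_pair_eq_div_self
  calc
    _ = span R {(algebraMap A K c)⁻¹} * span R {algebraMap R K (a * σ a),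
          algebraMap R K (a * σ b + b * σ a), algebraMap R K (b * σ b)} := by
      rw [span_mul_span, Set.singleton_mul]
      simp only [Set.image_insert_eq, Set.image_singleton, map_mul, map_add]
      ring_nf
    _ = 1 := by
      rw [hcontent, span_mul_span, Set.singleton_mul_singleton, inv_mul_cancel₀ hc0, one_eq_span]

section FittingIdeal

variable {R K : Type*} [CommRing R] [Field K] [Algebra R K] [FaithfulSMul R K]

theorem image_syzygy_coeff_eq_span_mul_one_div {a b : R} (hab : Ideal.span {a, b} ≠ ⊥) :
    algebraMap R K '' {r | ∃ s, r * a + s * b = 0} =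
      (span R {algebraMap R K b} * (1 / coeSubmodule K (Ideal.span {a, b})) : Submodule R K) := by
  have hinj := FaithfulSMul.algebraMap_injective R K
  ext z
  simp only [coeSubmodule_span, Set.image_pair, SetLike.mem_coe, mem_span_singleton_mul,
    mem_div_span_pair, Set.mem_image, Set.mem_ofPred_eq]
  constructor
  · rintro ⟨r, ⟨s, hrs⟩, rfl⟩
    have hrs' : algebraMap R K r * algebraMap R K a + algebraMap R K s * algebraMap R K b = 0 := by
      simp only [← map_mul, ← map_add, hrs, map_zero]
    by_cases hb : algebraMap R K b = 0
    · have ha : algebraMap R K a ≠ 0 := fun ha ↦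
        hab (by simp [hinj (ha.trans (map_zero _).symm), hinj (hb.trans (map_zero _).symm)])
      have hr : algebraMap R K r = 0 := by simpa [hb, ha] using hrs'
      exact ⟨0, by simp, by simp [hr]⟩
    · refine ⟨algebraMap R K r / algebraMap R K b, ⟨mem_one.2 ⟨-s, ?_⟩, mem_one.2 ⟨r, ?_⟩⟩, ?_⟩
      · rw [map_neg]
        field_simp
        linear_combination -hrs'
      · field_simp
      · field_simp
  · rintro ⟨x, ⟨ha, hb⟩, rfl⟩
    obtain ⟨s, hs⟩ := mem_one.1 ha
    obtain ⟨r, hr⟩ := mem_one.1 hb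
    refine ⟨r, ⟨-s, hinj ?_⟩, by rw [hr, mul_comm]⟩
    simp only [map_add, map_mul, map_neg, map_zero, hr, hs]
    ring

theorem coeSubmodule_relFittingIdeal {a b : R} (hab : Ideal.span {a, b} ≠ ⊥) :
    coeSubmodule K (relFittingIdeal a b) =
      coeSubmodule K (Ideal.span {a, b}) * (1 / coeSubmodule K (Ideal.span {a, b})) := by
  have hleft := image_syzygy_coeff_eq_span_mul_one_div (K := K) hab
  have hright := image_syzygy_coeff_eq_span_mul_one_div (K := K) (Set.pair_comm a b ▸ hab)
  simp only [Set.pair_comm b a, add_comm (_ * b)] at hright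
  rw [relFittingIdeal, coeSubmodule_span, Set.ofPred_or, Set.image_union, hleft, hright, span_union,
    span_eq, span_eq, ← Submodule.sup_mul, ← span_union, Set.singleton_union, Set.pair_comm,
    ← Set.image_pair, ← coeSubmodule_span]

theorem mem_relFittingIdeal_iff_mem_one_div_div_self {a b z : R} (hab : Ideal.span {a, b} ≠ ⊥)
    {L : Submodule R K} (hL : coeSubmodule K (Ideal.span {a, b}) * L =
      coeSubmodule K (Ideal.span {a, b}) / coeSubmodule K (Ideal.span {a, b})) :
    z ∈ relFittingIdeal a b ↔ algebraMap R K z ∈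
      1 / (coeSubmodule K (Ideal.span {a, b}) / coeSubmodule K (Ideal.span {a, b})) := by
  rw [← mul_one_div_eq_one_div_div_self hL, ← coeSubmodule_relFittingIdeal hab]
  exact (Function.Injective.mem_set_image (FaithfulSMul.algebraMap_injective R K)).symm

end FittingIdeal

/-- `1` and `θ` form a basis of the quadratic order `A + Aθ`, in which `θ² = n + tθ`; the order of
the parameters is that of `QuadraticAlgebra A n t`, to which `A + Aθ` is isomorphic. -/
structure IsQuadraticGenerator {A K : Type*} [CommRing A] [CommRing K] [Algebra A K]
    (θ : K) (n t : A) : Prop where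
  mul_self_eq : θ * θ = n • 1 + t • θ
  linearIndependent : LinearIndependent A ![1, θ]

namespace IsQuadraticGenerator

variable {A K : Type*} [CommRing A] [CommRing K] [Algebra A K] {θ : K} {n t : A}

theorem smul [NoZeroDivisors A] (hθ : IsQuadraticGenerator θ n t) {c : A} (hc : c ≠ 0) :
    IsQuadraticGenerator (c • θ) (c ^ 2 * n) (c * t) where
  mul_self_eq := by
    rw [smul_mul_smul_comm, hθ.mul_self_eq]
    module
  linearIndependent := by
    have hθ' := LinearIndependent.pair_iff.1 hθ.linearIndependent
    refine LinearIndependent.pair_iff.2 fun u v huv ↦ ?_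
    obtain ⟨hu, hv⟩ := hθ' u (v * c) (by rwa [mul_smul])
    exact ⟨hu, (mul_eq_zero_iff_right hc).1 hv⟩

theorem natCast_mul {n t : ℤ} (hθ : IsQuadraticGenerator θ n t) {c : ℕ} (hc : c ≠ 0) :
    IsQuadraticGenerator (c * θ) ((c : ℤ) ^ 2 * n) (c * t) := by
  simpa only [zsmul_eq_mul, Int.cast_natCast] using hθ.smul (Nat.cast_ne_zero.2 hc)

theorem span_one_smul_div_span_one (hθ : IsQuadraticGenerator θ n t) (g : A) :
    span A {1, g • θ} / span A {1, θ} = span A {algebraMap A K g, g • θ} := by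
  have hsq := hθ.mul_self_eq
  simp only [Algebra.smul_def, mul_one] at hsq
  ext z
  simp only [mem_div_span_pair, mem_span_pair, Algebra.smul_def, mul_one]
  constructor
  · rintro ⟨⟨u, v, hz⟩, ⟨c, d, hzθ⟩⟩
    obtain ⟨-, hu⟩ := LinearIndependent.pair_iff.1 hθ.linearIndependent
      (v * g * n - c) (u + v * g * t - d * g) (by
        simp only [Algebra.smul_def, map_sub, map_add, map_mul]
        linear_combination θ * hz - hzθ - algebraMap A K v * algebraMap A K g * hsq)
    have hu' : u = (d - v * t) * g := by linear_combination hu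
    refine ⟨d - v * t, v, ?_⟩
    rw [← hz, hu', map_mul]
  · rintro ⟨u, v, rfl⟩
    refine ⟨⟨u * g, v, by rw [map_mul]⟩, v * g * n, u + v * t, ?_⟩
    simp only [map_add, map_mul]
    linear_combination -(algebraMap A K v * algebraMap A K g) * hsq

theorem exists_ringEquiv_mul_apply_eq_algebraMap (hθ : IsQuadraticGenerator θ n t)
    (hspan : span A {1, θ} = ⊤) :
    ∃ σ : K ≃+* K, ∀ x, ∃ c : A, x * σ x = algebraMap A K c := by
  let φ : QuadraticAlgebra A n t →ₐ[A] K := QuadraticAlgebra.lift ⟨θ, hθ.mul_self_eq⟩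
  have hφ (x : QuadraticAlgebra A n t) : φ x = x.re • 1 + x.im • θ := by
    simp [φ, QuadraticAlgebra.lift, Algebra.smul_def]
  have hbij : Function.Bijective φ := by
    refine ⟨(injective_iff_map_eq_zero φ).2 fun x hx ↦ ?_, fun y ↦ ?_⟩
    · obtain ⟨hre, him⟩ :=
        LinearIndependent.pair_iff.1 hθ.linearIndependent _ _ ((hφ x).symm.trans hx)
      exact QuadraticAlgebra.ext hre him
    · obtain ⟨u, v, rfl⟩ := mem_span_pair.1 (hspan ▸ mem_top : y ∈ span A {1, θ})
      exact ⟨⟨u, v⟩, hφ _⟩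
  let e := AlgEquiv.ofBijective φ hbij
  refine ⟨(e.symm.toRingEquiv.trans starRingAut).trans e.toRingEquiv, fun x ↦ ?_⟩
  obtain ⟨z, rfl⟩ := e.surjective x
  refine ⟨z.norm, ?_⟩
  rw [← e.commutes, QuadraticAlgebra.algebraMap_norm_eq_mul_star, map_mul]
  simp

theorem algebraMap_mem_span_pair_iff (hθ : IsQuadraticGenerator θ n t) {g k : A} :
    algebraMap A K k ∈ span A {algebraMap A K g, θ} ↔ g ∣ k := by
  rw [mem_span_pair]
  constructor
  · rintro ⟨u, v, h⟩
    obtain ⟨hk, -⟩ := LinearIndependent.pair_iff.1 hθ.linearIndependent (u * g - k) v (by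
      simp only [Algebra.smul_def, map_sub, map_mul] at h ⊢
      linear_combination h)
    exact ⟨u, by linear_combination -hk⟩
  · rintro ⟨u, rfl⟩
    exact ⟨u, 0, by rw [zero_smul, add_zero, map_mul, Algebra.smul_def, mul_comm]⟩

theorem of_algebraMap {R : Type*} [CommRing R] [Algebra A R] [Algebra R K] [IsScalarTower A R K]
    [FaithfulSMul R K] {η : R} (hη : IsQuadraticGenerator (algebraMap R K η) n t) :
    IsQuadraticGenerator η n t where
  mul_self_eq := FaithfulSMul.algebraMap_injective R K <| by
    simpa only [Algebra.smul_def, map_add, map_mul, map_one, ← IsScalarTower.algebraMap_apply]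
      using hη.mul_self_eq
  linearIndependent := LinearIndependent.pair_iff.2 fun u v huv ↦
    LinearIndependent.pair_iff.1 hη.linearIndependent u v <| by
      simpa only [Algebra.smul_def, map_add, map_mul, map_one, map_zero,
        ← IsScalarTower.algebraMap_apply] using congrArg (algebraMap R K) huv

end IsQuadraticGenerator

theorem mem_span_int_pair {R : Type*} [Ring R] {x y z : R} :
    z ∈ span ℤ {x, y} ↔ ∃ u v : ℤ, z = u * x + v * y := by
  simp only [mem_span_pair, zsmul_eq_mul, eq_comm (a := z)]

theorem mem_span_int_one_pair {R : Type*} [Ring R] {y z : R} :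
    z ∈ span ℤ {1, y} ↔ ∃ u v : ℤ, z = u + v * y := by
  simp only [mem_span_int_pair, mul_one]

theorem nonempty_quotient_ringEquiv_zmod {R : Type*} [CommRing R] (F : Ideal R) (g : ℕ)
    (hF : ∀ z : R, ∃ k : ℤ, z - k ∈ F) (hg : ∀ k : ℤ, (k : R) ∈ F ↔ (g : ℤ) ∣ k) :
    Nonempty ((R ⧸ F) ≃+* ZMod g) := by
  let φ : ℤ →+* R ⧸ F := (Ideal.Quotient.mk F).comp (Int.castRingHom R)
  have hφ : Function.Surjective φ := by
    intro y
    obtain ⟨z, rfl⟩ := Ideal.Quotient.mk_surjective y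
    obtain ⟨k, hk⟩ := hF z
    exact ⟨k, (Ideal.Quotient.eq.2 hk).symm⟩
  have hker : RingHom.ker φ = Ideal.span {(g : ℤ)} := by
    ext k
    exact Ideal.Quotient.eq_zero_iff_mem.trans ((hg k).trans Ideal.mem_span_singleton.symm)
  exact ⟨((RingHom.quotientKerEquivOfSurjective hφ).symm.trans (Ideal.quotEquivOfEq hker)).trans
    (Int.quotientSpanNatEquivZMod g)⟩

theorem mem_one_iff_mem_subring {K : Type*} [CommRing K] {O : Subring K} {x : K} :
    x ∈ (1 : Submodule O K) ↔ x ∈ O := by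
  rw [mem_one]
  exact ⟨fun ⟨y, hy⟩ ↦ hy ▸ y.2, fun hx ↦ ⟨⟨x, hx⟩, rfl⟩⟩

section Subring

variable {K : Type*} [Field K] {O : Subring K}

theorem relFittingIdeal_eq_span_mul_inverse {I : Ideal O} (hI : I ≠ ⊥) {a b : O}
    (hab : I = Ideal.span {a, b}) :
    relFittingIdeal a b =
      Ideal.span {w : O | ∃ x : K, (∀ y : O, y ∈ I → x * (y : K) ∈ O) ∧
        ∃ y : O, y ∈ I ∧ (w : K) = x * (y : K)} := by
  have h := coeSubmodule_span_mul_eq_mul_one_div (K := K) I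
  simp only [mem_div_coeSubmodule_iff, mem_one_iff_mem_subring] at h
  subst hab
  exact map_injective_of_injective (FaithfulSMul.algebraMap_injective O K)
    ((coeSubmodule_relFittingIdeal hI).trans h.symm)

theorem exists_mul_eq_div_self_of_isQuadraticGenerator {η : K} {n t : ℤ}
    (hη : IsQuadraticGenerator η n t) (hO : ∀ x, x ∈ O ↔ x ∈ span ℤ {1, η}) {a b : O}
    (hab : Ideal.span {a, b} ≠ ⊥) :
    ∃ L : Submodule O K, coeSubmodule K (Ideal.span {a, b}) * L =
      coeSubmodule K (Ideal.span {a, b}) / coeSubmodule K (Ideal.span {a, b}) := by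
  let η' : O := ⟨η, (hO η).2 (subset_span (by simp))⟩
  have hη' : IsQuadraticGenerator η' n t := .of_algebraMap (K := K) hη
  have hspan : span ℤ {1, η'} = ⊤ := by
    refine eq_top_iff'.2 fun x ↦ ?_
    obtain ⟨u, v, hx⟩ := mem_span_int_pair.1 ((hO x).1 x.2)
    exact mem_span_int_pair.2 ⟨u, v, Subtype.ext (by simpa [η'] using hx)⟩
  obtain ⟨σ, hσ⟩ := hη'.exists_ringEquiv_mul_apply_eq_algebraMap hspan
  exact exists_span_pair_mul_eq_div_self (σ : O →+ O) σ.injective hσ hab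

theorem mem_relFittingIdeal_iff_forall_mul_mem {η : K} {n t : ℤ}
    (hη : IsQuadraticGenerator η n t) (hO : ∀ x, x ∈ O ↔ x ∈ span ℤ {1, η})
    {I : Ideal O} (hI : I ≠ ⊥) {a b : O} (hab : I = Ideal.span {a, b}) {z : O} :
    z ∈ relFittingIdeal a b ↔
      ∀ x : K, (∀ y ∈ I, ∃ w ∈ I, x * (y : K) = (w : K)) → (z : K) * x ∈ O := by
  subst hab
  obtain ⟨L, hL⟩ := exists_mul_eq_div_self_of_isQuadraticGenerator hη hO hI
  rw [mem_relFittingIdeal_iff_mem_one_div_div_self hI hL, mem_div_iff_forall_mul_mem]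
  simp only [mem_div_coeSubmodule_iff, mem_one_iff_mem_subring, mem_coeSubmodule,
    eq_comm (b := _ * _)]
  rfl

theorem mem_relFittingIdeal_iff_mem_span_pair {θ : K} {n t : ℤ} {g : ℕ}
    (hθ : IsQuadraticGenerator θ n t) (hg : g ≠ 0) (hO : ∀ x, x ∈ O ↔ x ∈ span ℤ {1, g * θ})
    {I : Ideal O} (hI : I ≠ ⊥) {a b : O} (hab : I = Ideal.span {a, b})
    (hmult : ∀ x : K, (∀ y ∈ I, ∃ w ∈ I, x * (y : K) = (w : K)) ↔ x ∈ span ℤ {1, θ}) {z : O} :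
    z ∈ relFittingIdeal a b ↔ (z : K) ∈ span ℤ {(g : K), g * θ} := by
  have hdiv := hθ.span_one_smul_div_span_one (g : ℤ)
  simp only [algebraMap_int_eq, eq_intCast, zsmul_eq_mul, Int.cast_natCast] at hdiv
  simp only [mem_relFittingIdeal_iff_forall_mul_mem (hθ.natCast_mul hg) hO hI hab, hmult, hO,
    ← hdiv, mem_div_iff_forall_mul_mem]

theorem nonempty_quotient_ringEquiv_zmod_of_isQuadraticGenerator {η : K} {n t : ℤ} {g : ℕ}
    (hη : IsQuadraticGenerator η n t) (hO : ∀ x, x ∈ O ↔ x ∈ span ℤ {1, η}) {F : Ideal O}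
    (hF : ∀ z : O, z ∈ F ↔ (z : K) ∈ span ℤ {(g : K), η}) :
    Nonempty ((O ⧸ F) ≃+* ZMod g) := by
  refine nonempty_quotient_ringEquiv_zmod F g (fun z ↦ ?_) fun k ↦ ?_
  · obtain ⟨u, v, hz⟩ := mem_span_int_one_pair.1 ((hO z).1 z.2)
    exact ⟨u, (hF _).2 (mem_span_int_pair.2 ⟨0, v, by simp [hz]⟩)⟩
  · rw [hF]
    simpa using hη.algebraMap_mem_span_pair_iff (g := (g : ℤ)) (k := k)

end Subring

theorem linearIndependent_one_of_existsUnique {F K : Type*} [CommRing F] [CommRing K] [Algebra F K]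
    {s : K} (hs : ∀ x : K, ∃! c : F × F, x = algebraMap F K c.1 + algebraMap F K c.2 * s) :
    LinearIndependent F ![1, s] := by
  refine LinearIndependent.pair_iff.2 fun u v huv ↦ ?_
  exact Prod.ext_iff.1 <| (hs 0).unique (y₁ := (u, v)) (y₂ := 0)
    (by simpa [Algebra.smul_def] using huv.symm) (by simp)

theorem exists_isQuadraticGenerator_of_sq_eq {K : Type*} [Field K] [Algebra ℚ K]
    {m : ℤ} {s ω : K} (hs : s ^ 2 = m) (hind : LinearIndependent ℚ ![1, s])
    (hω : ω = if m % 4 = 1 then (1 + s) / 2 else s) :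
    ∃ n t : ℤ, IsQuadraticGenerator ω n t := by
  have : CharZero K := algebraRat.charZero K
  rw [LinearIndependent.pair_iff] at hind
  split_ifs at hω with hm
  · refine ⟨m / 4, 1, ?_, LinearIndependent.pair_iff.2 fun u v huv ↦ ?_⟩
    · have hm' : (m : K) = 4 * (m / 4 : ℤ) + 1 := by exact_mod_cast (by omega)
      simp only [hω, zsmul_eq_mul, Int.cast_one]
      linear_combination (hs + hm') / 4
    · obtain ⟨hu, hv⟩ := hind (u + v / 2) (v / 2) (by
        simp only [hω, Algebra.smul_def, map_add, map_div₀, map_intCast,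
          map_ofNat] at huv ⊢
        linear_combination huv)
      have hv0 : (v : ℚ) = 0 := by linarith
      have hu0 : (u : ℚ) = 0 := by linarith
      exact ⟨mod_cast hu0, mod_cast hv0⟩
  · refine ⟨m, 0, ?_, LinearIndependent.pair_iff.2 fun u v huv ↦ ?_⟩
    · simp [hω, ← hs, sq]
    · have := hind u v (by simpa [hω, Algebra.smul_def] using huv)
      exact_mod_cast this

theorem order_fitting_ideal_general {K : Type*} [Field K] {ω : K} {n t : ℤ}
    (hω : IsQuadraticGenerator ω n t) {f : ℕ} (hf : 0 < f) {O : Subring K}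
    (hO : ∀ x : K, x ∈ O ↔ ∃ a b : ℤ, x = a + b * ((f : K) * ω))
    {I : Ideal O} (hI : I ≠ ⊥) {a b : O} (hab : I = Ideal.span {a, b})
    {f' : ℕ} (hf' : f' ∣ f)
    (hmult : ∀ x : K,
      (∀ y : O, y ∈ I → ∃ z : O, z ∈ I ∧ x * (y : K) = (z : K)) ↔
        ∃ u v : ℤ, x = u + v * ((f' : K) * ω)) :
    relFittingIdeal a b =
      Ideal.span {w : O | ∃ x : K, (∀ y : O, y ∈ I → x * (y : K) ∈ O) ∧
        ∃ y : O, y ∈ I ∧ (w : K) = x * (y : K)} ∧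
    (∀ z : O, z ∈ relFittingIdeal a b ↔
      ∃ u v : ℤ, (z : K) = u * ((f / f' : ℕ) : K) + v * ((f : K) * ω)) ∧
    (∀ z : O, z ∈ relFittingIdeal a b ↔
      ∀ x : K, (∃ u v : ℤ, x = u + v * ((f' : K) * ω)) → (z : K) * x ∈ O) ∧
    Nonempty ((O ⧸ relFittingIdeal a b) ≃+* ZMod (f / f')) := by
  obtain ⟨g, rfl⟩ := hf'
  have hf'0 : 0 < f' := Nat.pos_of_mul_pos_right hf
  have hg0 : 0 < g := Nat.pos_of_mul_pos_left hf
  have hθ := hω.natCast_mul hf'0.ne'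
  have hη := hθ.natCast_mul hg0.ne'
  have hcast : ((f' * g : ℕ) : K) * ω = g * (f' * ω) := by
    push_cast
    ring
  rw [Nat.mul_div_cancel_left g hf'0]
  simp_rw [hcast, ← mem_span_int_one_pair, ← mem_span_int_pair] at hO hmult ⊢
  have hlattice (z : O) : z ∈ relFittingIdeal a b ↔ (z : K) ∈ span ℤ {(g : K), g * (f' * ω)} :=
    mem_relFittingIdeal_iff_mem_span_pair hθ hg0.ne' hO hI hab hmult
  refine ⟨relFittingIdeal_eq_span_mul_inverse hI hab, hlattice, fun z ↦ ?_,
    nonempty_quotient_ringEquiv_zmod_of_isQuadraticGenerator hη hO hlattice⟩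
  simp only [mem_relFittingIdeal_iff_forall_mul_mem hη hO hI hab, hmult]

set_option synthInstance.maxHeartbeats 1000000 in
set_option maxHeartbeats 1000000 in
/-- Let `O = 𝒪_f = ℤ + ℤfω` be the order of conductor `f` in the
quadratic field `K = ℚ(√m)`, `I` a nonzero ideal of `O` with generating pair `(a, b)`,
and `f' ∣ f` such that the multiplier ring `ϱ(I)` equals `𝒪_{f'} = ℤ + ℤf'ω`.  Then
`Fitt₁(I) = I·I⁻¹ = ℤ(f/f') + ℤfω = (O : 𝒪_{f'})`, and `O/Fitt₁(I) ≃ ℤ/(f/f')ℤ`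
as rings. -/
theorem order_fitting_ideal (m : ℤ) (hm : Squarefree m) (hm1 : m ≠ 1)
    (K : Type*) [Field K] [Algebra ℚ K] (sqm : K) (hsqm : sqm ^ 2 = (m : K))
    (hbasis : ∀ x : K, ∃! c : ℚ × ℚ,
      x = algebraMap ℚ K c.1 + algebraMap ℚ K c.2 * sqm)
    (ω : K) (hω : ω = if m % 4 = 1 then (1 + sqm) / 2 else sqm)
    (f : ℕ) (hf : 0 < f)
    (O : Subring K) (hO : ∀ x : K, x ∈ O ↔ ∃ a b : ℤ, x = a + b * ((f : K) * ω))
    (I : Ideal O) (hI : I ≠ ⊥)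
    (a b : O) (hab : I = Ideal.span {a, b})
    (f' : ℕ) (hf'0 : 0 < f') (hf' : f' ∣ f)
    (hmult : ∀ x : K,
      (∀ y : O, y ∈ I → ∃ z : O, z ∈ I ∧ x * (y : K) = (z : K)) ↔
        ∃ u v : ℤ, x = u + v * ((f' : K) * ω)) :
    relFittingIdeal a b =
      Ideal.span {w : O | ∃ x : K, (∀ y : O, y ∈ I → x * (y : K) ∈ O) ∧
        ∃ y : O, y ∈ I ∧ (w : K) = x * (y : K)} ∧
    (∀ z : O, z ∈ relFittingIdeal a b ↔
      ∃ u v : ℤ, (z : K) = u * ((f / f' : ℕ) : K) + v * ((f : K) * ω)) ∧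
    (∀ z : O, z ∈ relFittingIdeal a b ↔
      ∀ x : K, (∃ u v : ℤ, x = u + v * ((f' : K) * ω)) → (z : K) * x ∈ O) ∧
    Nonempty ((O ⧸ relFittingIdeal a b) ≃+* ZMod (f / f')) := by
  obtain ⟨n, t, hω'⟩ := exists_isQuadraticGenerator_of_sq_eq hsqm
    (linearIndependent_one_of_existsUnique hbasis) hω
  exact order_fitting_ideal_general hω' hf hO hI hab hf' hmult
end

section
/- Let R = 𝒪_f be an order in a quadratic number field and I an ideal of R. Then for every n > 2, SLₙ(R) acts transitively on the set Vₙ(I) of generating vectors of I of length n. -/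
/-!
The order `R` is generated by two elements as an abelian group, hence so is each of its subgroups,
in particular every ideal. Let `I = (c, d)` with `c ≠ 0`. The quotient of `R` by the nonzero ideal
`(c : d)` is finite, so it has stable range one. Hence any coordinate of a vector generating `I` can
be changed, by adding to it a combination of the other coordinates, into an element generating `I`
together with `c`. Doing this to two coordinates, the second time relative to the value `y` of the
first, leaves a vector in which `y` and one further coordinate already generate `I`. From then on a
third coordinate serves as scratch space: any element of `I` can be written there and used to
replace the two generators one after the other, until the vector is `(c, d, 0, …, 0)`.
-/

section StableRange

variable {R : Type*} [CommRing R]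

/-- Bass's stable range condition in rank one: every unimodular pair `(a, b)` can be shortened to a
unit `a + t * b`. -/
def HasStableRangeOne (A : Type*) [CommRing A] : Prop :=
  ∀ a b : A, IsCoprime a b → ∃ t, IsUnit (a + t * b)

theorem hasStableRangeOne_of_finite_maximalSpectrum (A : Type*) [CommRing A]
    [Finite (MaximalSpectrum A)] : HasStableRangeOne A := by
  classical
  intro a b hab
  obtain ⟨t, ht⟩ := Ideal.exists_forall_sub_mem_ideal
    (I := fun M : MaximalSpectrum A ↦ M.asIdeal)
    (fun M N hMN ↦ Ideal.isCoprime_of_isMaximal (mt MaximalSpectrum.ext hMN))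
    (fun M ↦ if a ∈ M.asIdeal then 1 else 0)
  refine ⟨t, by_contra fun hunit ↦ ?_⟩
  obtain ⟨M, hM, hmem⟩ := exists_max_ideal_of_mem_nonunits hunit
  have htM := ht ⟨M, hM⟩
  by_cases ha : a ∈ M
  · have hb : b ∈ M := by
      simp only [ha, if_true] at htM
      have hb_eq : a + t * b - a - (t - 1) * b = b := by ring
      exact hb_eq ▸ M.sub_mem (M.sub_mem hmem ha) (M.mul_mem_right b htM)
    obtain ⟨x, y, hxy⟩ := hab
    exact hM.ne_top <| (Ideal.eq_top_iff_one M).2 <|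
      hxy ▸ M.add_mem (M.mul_mem_left x ha) (M.mul_mem_left y hb)
  · simp only [ha, if_false, sub_zero] at htM
    exact ha ((M.add_mem_iff_left (M.mul_mem_right b htM)).1 hmem)

/-- McGovern's almost stable range one: every quotient by a nonzero ideal has stable range one. -/
def HasAlmostStableRangeOne (R : Type*) [CommRing R] : Prop :=
  ∀ J : Ideal R, J ≠ ⊥ → HasStableRangeOne (R ⧸ J)

theorem hasAlmostStableRangeOne_of_hasFiniteQuotients (R : Type*) [CommRing R]
    [Ring.HasFiniteQuotients R] : HasAlmostStableRangeOne R := fun J hJ ↦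
  have : Finite (R ⧸ J) := Ring.HasFiniteQuotients.finiteQuotient hJ
  hasStableRangeOne_of_finite_maximalSpectrum (R ⧸ J)

theorem HasStableRangeOne.exists_mul_sub_one_mem {J : Ideal R} (hJ : HasStableRangeOne (R ⧸ J))
    {a b x y : R} (h : x * a + y * b - 1 ∈ J) : ∃ t u, u * (a + t * b) - 1 ∈ J := by
  obtain ⟨t, ht⟩ := hJ (Ideal.Quotient.mk J a) (Ideal.Quotient.mk J b)
    ⟨Ideal.Quotient.mk J x, Ideal.Quotient.mk J y, by
      simpa only [map_add, map_mul, map_one] using Ideal.Quotient.eq.2 h⟩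
  obtain ⟨u, hu⟩ := ht.exists_left_inv
  obtain ⟨t, rfl⟩ := Ideal.Quotient.mk_surjective t
  obtain ⟨u, rfl⟩ := Ideal.Quotient.mk_surjective u
  exact ⟨t, u, Ideal.Quotient.eq.1 (by simpa only [map_add, map_mul, map_one] using hu)⟩

theorem HasAlmostStableRangeOne.exists_span_pair_eq (hR : HasAlmostStableRangeOne R)
    {a b c d : R} (hc : c ≠ 0) (h : Ideal.span {a, b, c} = Ideal.span {c, d}) :
    ∃ t, Ideal.span {a + t * b, c} = Ideal.span {c, d} := by
  let J : Ideal R := (Ideal.span {c}).colon {d}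
  have mem_J (x : R) : x ∈ J ↔ ∃ q, q * c = x * d := by
    rw [Submodule.mem_colon_singleton, smul_eq_mul, Ideal.mem_span_singleton']
  have hJ : J ≠ ⊥ := (Submodule.ne_bot_iff _).2 ⟨c, (mem_J c).2 ⟨d, mul_comm d c⟩, hc⟩
  have ha : a ∈ Ideal.span {c, d} := h ▸ Ideal.subset_span (by simp)
  have hb : b ∈ Ideal.span {c, d} := h ▸ Ideal.subset_span (by simp)
  have hd : d ∈ Ideal.span {a, b, c} := h ▸ Ideal.subset_span (by simp)
  -- Modulo `c` we have `a = e * d` and `b = e' * d`, so `(e, e')` is unimodular modulo `J`.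
  obtain ⟨p, e, hpe⟩ := Ideal.mem_span_pair.1 ha
  obtain ⟨p', e', hpe'⟩ := Ideal.mem_span_pair.1 hb
  obtain ⟨r, s, q, hd⟩ := Submodule.mem_span_triple.1 hd
  simp only [smul_eq_mul] at hd
  have hee' : r * e + s * e' - 1 ∈ J :=
    (mem_J _).2 ⟨-(r * p + s * p' + q), by linear_combination -hd - r * hpe - s * hpe'⟩
  obtain ⟨t, u, hu⟩ := (hR J hJ).exists_mul_sub_one_mem hee'
  obtain ⟨l, hl⟩ := (mem_J _).1 hu
  refine ⟨t, le_antisymm ?_ ?_⟩ <;> rw [Ideal.span_le, Set.pair_subset_iff]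
  · exact ⟨Ideal.add_mem _ ha (Ideal.mul_mem_left _ t hb), Ideal.subset_span (by simp)⟩
  · exact ⟨Ideal.subset_span (by simp), Ideal.mem_span_pair.2
      ⟨u, -(u * (p + t * p') + l), by linear_combination -hl - u * hpe - u * t * hpe'⟩⟩

theorem HasAlmostStableRangeOne.exists_mem_span_add_pair_eq (hR : HasAlmostStableRangeOne R)
    {a c d : R} {B : Ideal R} (hc : c ≠ 0) (hB : Ideal.span {a} ⊔ B = Ideal.span {c, d}) :
    ∃ b ∈ B, Ideal.span {a + b, c} = Ideal.span {c, d} := by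
  have hc_mem : c ∈ Ideal.span {a} ⊔ B := hB ▸ Ideal.subset_span (by simp)
  have hd_mem : d ∈ Ideal.span {a} ⊔ B := hB ▸ Ideal.subset_span (by simp)
  obtain ⟨_, ha, b, hb, hab⟩ := Submodule.mem_sup.1 hd_mem
  obtain ⟨r, rfl⟩ := Ideal.mem_span_singleton'.1 ha
  have hspan : Ideal.span {a, b, c} = Ideal.span {c, d} := by
    apply le_antisymm
    · rw [← hB, Ideal.span_le]
      rintro _ (rfl | rfl | rfl)
      exacts [Ideal.mem_sup_left (Ideal.mem_span_singleton_self _), Ideal.mem_sup_right hb, hc_mem]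
    · rw [Ideal.span_le, Set.pair_subset_iff]
      exact ⟨Ideal.subset_span (by simp), Submodule.mem_span_triple.2 ⟨r, 1, 0, by simpa using hab⟩⟩
  obtain ⟨t, ht⟩ := hR.exists_span_pair_eq hc hspan
  exact ⟨t * b, B.mul_mem_left t hb, ht⟩

end StableRange

section SLEquivalent

open Function Matrix Set

variable {ι R : Type*} [Fintype ι] [DecidableEq ι] [CommRing R] {u v w : ι → R}

/-- The orbit relation of the right action of `SL ι R` on row vectors: `w = v * σ` for some `σ`. -/
def SLEquivalent (v w : ι → R) : Prop :=
  ∃ σ : SpecialLinearGroup ι R, v ᵥ* (σ : Matrix ι ι R) = w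

namespace SLEquivalent

theorem refl (v : ι → R) : SLEquivalent v v := ⟨1, vecMul_one v⟩

theorem trans (huv : SLEquivalent u v) (hvw : SLEquivalent v w) : SLEquivalent u w := by
  obtain ⟨σ, rfl⟩ := huv
  obtain ⟨τ, rfl⟩ := hvw
  exact ⟨σ * τ, by simp [vecMul_vecMul]⟩

theorem symm (h : SLEquivalent v w) : SLEquivalent w v := by
  obtain ⟨σ, rfl⟩ := h
  exact ⟨σ⁻¹, by simp [vecMul_vecMul, mul_adjugate]⟩

theorem span_range_le (h : SLEquivalent v w) :
    Ideal.span (range w) ≤ Ideal.span (range v) := by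
  obtain ⟨σ, rfl⟩ := h
  rw [Ideal.span_le, range_subset_iff]
  exact fun j ↦ Ideal.sum_mem _ fun i _ ↦
    Ideal.mul_mem_right _ _ (Ideal.subset_span (mem_range_self i))

theorem span_range_eq (h : SLEquivalent v w) :
    Ideal.span (range v) = Ideal.span (range w) :=
  le_antisymm h.symm.span_range_le h.span_range_le

end SLEquivalent

theorem slEquivalent_update {i : ι} {x : R} (h : x - v i ∈ Ideal.span (v '' {i}ᶜ)) :
    SLEquivalent v (update v i x) := by
  rw [← Finset.coe_singleton, ← Finset.coe_compl] at h
  obtain ⟨c, hc⟩ := (Submodule.mem_span_image_finset_iff_exists_fun' R).1 h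
  have hvc : v ⬝ᵥ update c i 0 = x - v i := by
    rw [← hc, dotProduct, ← Finset.sum_compl_add_sum {i}, Finset.sum_singleton, update_self,
      mul_zero, add_zero]
    refine Finset.sum_congr rfl fun j hj ↦ ?_
    rw [update_of_ne (by simpa using hj), smul_eq_mul, mul_comm]
  refine ⟨⟨1 + vecMulVec (update c i 0) (Pi.single i 1), ?_⟩, ?_⟩
  · rw [vecMulVec_eq Unit, det_one_add_replicateCol_mul_replicateRow]
    simp
  · rw [vecMul_add, vecMul_one, vecMul_vecMulVec, hvc]
    ext j
    obtain rfl | hj := eq_or_ne j i <;> simp [*]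

theorem slEquivalent_of_eqOn {s : Set ι} (hs : EqOn w v s)
    (h : ∀ j, w j - v j ∈ Ideal.span (v '' s)) : SLEquivalent v w := by
  classical
  suffices ∀ t : Finset ι, SLEquivalent v (t.piecewise w v) by
    simpa using this Finset.univ
  intro t
  induction t using Finset.induction_on with
  | empty => simpa using SLEquivalent.refl v
  | insert j t hj ih =>
    rw [Finset.piecewise_insert]
    refine ih.trans ?_
    set u := t.piecewise w v
    have huj : u j = v j := Finset.piecewise_eq_of_notMem t w v hj
    by_cases hjs : j ∈ s
    · rw [hs hjs, ← huj, update_eq_self]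
      exact .refl u
    · have hus : EqOn v u s := fun k hk ↦
        Finset.piecewise_cases t w v (v k = ·) (hs hk).symm rfl
      refine slEquivalent_update (Ideal.span_mono ?_ (huj ▸ h j))
      rw [hus.image_eq]
      exact image_mono (subset_compl_singleton_iff.2 hjs)

theorem slEquivalent_update_of_mem_span_pair {i j k : ι} {x : R} (hik : i ≠ k) (hjk : j ≠ k)
    (h : x - v k ∈ Ideal.span {v i, v j}) : SLEquivalent v (update v k x) :=
  slEquivalent_update <| Ideal.span_mono (by
    rw [← image_pair]
    exact image_mono (pair_subset hik hjk)) h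

theorem HasAlmostStableRangeOne.exists_slEquivalent_update (hR : HasAlmostStableRangeOne R)
    {c d : R} (hc : c ≠ 0) (hv : Ideal.span (range v) = Ideal.span {c, d}) (i : ι) :
    ∃ x ≠ 0, Ideal.span {x, c} = Ideal.span {c, d} ∧ SLEquivalent v (update v i x) := by
  set B := Ideal.span (v '' {i}ᶜ)
  have hsup : Ideal.span {v i} ⊔ B = Ideal.span {c, d} := by
    rw [← hv, ← Ideal.span_union, ← image_singleton, ← image_union, union_compl_self, image_univ]
  obtain ⟨b, hb, hbc⟩ := hR.exists_mem_span_add_pair_eq hc hsup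
  by_cases hx : v i + b = 0
  · -- Then `v i ∈ B`, so `B` is the whole ideal and the coordinate can be set to `c` itself.
    have hvi : v i ∈ B := by
      rw [eq_neg_of_add_eq_zero_left hx]
      exact neg_mem hb
    have hcB : c ∈ B := by
      rw [← sup_eq_right.2 ((Ideal.span_singleton_le_iff_mem B).2 hvi), hsup]
      exact Ideal.subset_span (by simp)
    refine ⟨c, hc, ?_, slEquivalent_update (sub_mem hcB hvi)⟩
    rw [← hbc, hx, pair_eq_singleton, Ideal.span_insert_zero]
  · exact ⟨v i + b, hx, hbc, slEquivalent_update (by rwa [add_sub_cancel_left])⟩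

theorem exists_slEquivalent_of_span_pair_eq {i j k : ι} (hij : i ≠ j) (hik : i ≠ k) (hjk : j ≠ k)
    {z : R} (hv : Ideal.span (range v) = Ideal.span {v i, v j})
    (hz : Ideal.span {v i, z} = Ideal.span {v i, v j}) :
    ∃ w, SLEquivalent v w ∧ w i = v i ∧ w j = z := by
  set u := update v k z with hu
  have hui : u i = v i := update_of_ne hik ..
  have huk : u k = z := update_self ..
  have hz_mem : z ∈ Ideal.span {v i, v j} := hz ▸ Ideal.subset_span (by simp)
  have mem_span (l : ι) : v l ∈ Ideal.span {v i, v j} :=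
    hv ▸ Ideal.subset_span (mem_range_self l)
  have hvu : SLEquivalent v u :=
    slEquivalent_update_of_mem_span_pair hik hjk (sub_mem hz_mem (mem_span k))
  have huw : SLEquivalent u (update u j z) :=
    slEquivalent_update_of_mem_span_pair hij hjk.symm <| by
      rw [hui, huk, hz, hu, update_of_ne hjk]
      exact sub_mem hz_mem (mem_span j)
  exact ⟨update u j z, hvu.trans huw, by rw [update_of_ne hij, hui], update_self ..⟩

theorem HasAlmostStableRangeOne.slEquivalent_update_single (hR : HasAlmostStableRangeOne R)
    {i j k : ι} (hij : i ≠ j) (hik : i ≠ k) (hjk : j ≠ k) {c d : R} (hc : c ≠ 0)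
    (hv : Ideal.span (range v) = Ideal.span {c, d}) :
    SLEquivalent v (update (Pi.single i c) j d) := by
  obtain ⟨y, hy, hyc, hvy⟩ := hR.exists_slEquivalent_update hc hv j
  obtain ⟨x, -, hxy, hyx⟩ := hR.exists_slEquivalent_update hy
    (hvy.span_range_eq.symm.trans (hv.trans hyc.symm)) i
  set u := update (update v j y) i x with hu
  have hui : u i = x := update_self ..
  have huj : u j = y := by rw [hu, update_of_ne hij.symm, update_self]
  have hvu : SLEquivalent v u := hvy.trans hyx
  obtain ⟨u₁, huu₁, hu₁j, hu₁i⟩ := exists_slEquivalent_of_span_pair_eq (v := u) (z := c)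
    hij.symm hjk hik
    (by rw [← hvu.span_range_eq, hv, hui, huj, pair_comm y x, hxy, hyc])
    (by rw [hui, huj, pair_comm y x, hxy])
  have hvu₁ := hvu.trans huu₁
  obtain ⟨u₂, hu₁u₂, hu₂i, hu₂j⟩ := exists_slEquivalent_of_span_pair_eq (v := u₁) (z := d)
    hij hik hjk
    (by rw [← hvu₁.span_range_eq, hv, hu₁i, hu₁j, huj, pair_comm c y, hyc])
    (by rw [hu₁i, hu₁j, huj, pair_comm c y, hyc])
  have hvu₂ := hvu₁.trans hu₁u₂
  rw [hu₁i] at hu₂i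
  refine hvu₂.trans (slEquivalent_of_eqOn (s := {i, j}) ?_ fun l ↦ ?_)
  · rintro _ (rfl | rfl) <;> simp [*]
  · rw [image_pair, hu₂i, hu₂j]
    refine sub_mem ?_ ?_
    · rw [update_apply, Pi.single_apply]
      split_ifs
      exacts [Ideal.subset_span (by simp), Ideal.subset_span (by simp), zero_mem _]
    · rw [← hv, hvu₂.span_range_eq]
      exact Ideal.subset_span (mem_range_self l)

theorem order_sl_transitive_general (hR : HasAlmostStableRangeOne R) {I : Ideal R}
    (hI : ∃ c d, I = Ideal.span {c, d}) (hι : 2 < Fintype.card ι)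
    (hv : Ideal.span (range v) = I) (hw : Ideal.span (range w) = I) :
    ∃ σ : SpecialLinearGroup ι R, ∀ j, w j = ∑ i, (σ : Matrix ι ι R) i j * v i := by
  suffices SLEquivalent v w by
    obtain ⟨σ, rfl⟩ := this
    exact ⟨σ, fun j ↦ dotProduct_comm ..⟩
  obtain ⟨i, j, k, hij, hik, hjk⟩ := Fintype.two_lt_card_iff.1 hι
  obtain ⟨c, d, rfl⟩ := hI
  wlog hc : c ≠ 0 generalizing c d
  · obtain rfl : c = 0 := not_not.1 hc
    by_cases hd : d = 0
    · have eq_zero {u : ι → R} (hu : Ideal.span (range u) = Ideal.span {0, d}) : u = 0 :=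
        funext fun l ↦ by
          simpa [hd] using hu.le (Ideal.subset_span (mem_range_self l))
      rw [eq_zero hv, eq_zero hw]
      exact .refl 0
    · exact this d 0 (by rwa [pair_comm]) (by rwa [pair_comm]) hd
  exact (hR.slEquivalent_update_single hij hik hjk hc hv).trans
    (hR.slEquivalent_update_single hij hik hjk hc hw).symm

end SLEquivalent

section PrincipalIdealRing

open Set

theorem exists_span_range_eq_of_le_span_range {A M : Type*} [CommRing A] [IsPrincipalIdealRing A]
    [AddCommGroup M] [Module A M] {n : ℕ} {v : Fin n → M} {N : Submodule A M}
    (hN : N ≤ Submodule.span A (range v)) : ∃ w : Fin n → M, Submodule.span A (range w) = N := by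
  induction n generalizing N with
  | zero => exact ⟨v, by simp_all⟩
  | succ n ih =>
    rw [← Fin.cons_self_tail v, Fin.range_cons, Submodule.span_insert] at hN
    set T := Submodule.span A (range (Fin.tail v))
    obtain ⟨w, hw⟩ := ih (v := Fin.tail v) (N := N ⊓ T) inf_le_right
    let P : Ideal A := (N ⊔ T).comap (LinearMap.toSpanSingleton A M (v 0))
    obtain ⟨b, hb⟩ := (inferInstance : P.IsPrincipal)
    have hbP : b • v 0 ∈ N ⊔ T := show b ∈ P from hb ▸ Submodule.mem_span_singleton_self b
    obtain ⟨z, hz, t, ht, hzt⟩ := Submodule.mem_sup.1 hbP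
    refine ⟨Fin.cons z w, ?_⟩
    rw [Fin.range_cons, Submodule.span_insert, hw]
    refine le_antisymm (sup_le ((Submodule.span_singleton_le_iff_mem z N).2 hz) inf_le_left)
      fun u hu ↦ ?_
    obtain ⟨_, hr, s, hs, hu_eq⟩ := Submodule.mem_sup.1 (hN hu)
    obtain ⟨r, rfl⟩ := Submodule.mem_span_singleton.1 hr
    have hrP : r ∈ P := Submodule.mem_sup.2 ⟨u, hu, -s, neg_mem hs, by
      rw [← hu_eq, add_neg_cancel_right, LinearMap.toSpanSingleton_apply]⟩
    obtain ⟨q, rfl⟩ := Submodule.mem_span_singleton.1 (hb ▸ hrP)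
    refine Submodule.mem_sup.2 ⟨q • z, Submodule.smul_mem _ q (Submodule.mem_span_singleton_self z),
      u - q • z, ⟨sub_mem hu (N.smul_mem q hz), ?_⟩, add_sub_cancel ..⟩
    have : u - q • z = q • t + s := by
      rw [← hu_eq, smul_assoc, ← hzt, smul_add]
      abel
    exact this ▸ add_mem (T.smul_mem q ht) hs

theorem exists_idealSpan_range_eq {A R : Type*} [CommRing A] [IsPrincipalIdealRing A] [CommRing R]
    [Algebra A R] {n : ℕ} {v : Fin n → R} (hv : Submodule.span A (range v) = ⊤) (I : Ideal R) :
    ∃ w : Fin n → R, Ideal.span (range w) = I := by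
  obtain ⟨w, hw⟩ := exists_span_range_eq_of_le_span_range (N := I.restrictScalars A) (v := v)
    (hv ▸ le_top)
  refine ⟨w, le_antisymm (Ideal.span_le.2 fun z hz ↦ ?_)
    fun z hz ↦ Submodule.span_le_restrictScalars A R _ (hw.ge hz)⟩
  exact (I.restrictScalars_mem A z).1 (hw.le (Submodule.subset_span hz))

end PrincipalIdealRing

section QuadraticOrder

open Set

variable {K : Type*} [CommRing K] {O : Subring K} {g : K}

theorem exists_span_int_range_eq_top_of_forall_mem_iff
    (hO : ∀ x, x ∈ O ↔ ∃ a b : ℤ, x = a + b * g) :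
    ∃ v : Fin 2 → O, Submodule.span ℤ (range v) = ⊤ := by
  have hg : g ∈ O := (hO g).2 ⟨0, 1, by simp⟩
  refine ⟨![1, ⟨g, hg⟩], eq_top_iff.2 fun x _ ↦ ?_⟩
  obtain ⟨a, b, hab⟩ := (hO x).1 x.2
  rw [Matrix.range_cons_cons_empty]
  exact Submodule.mem_span_pair.2 ⟨a, b, Subtype.ext <| by simp [hab]⟩

theorem exists_eq_idealSpan_pair_of_forall_mem_iff
    (hO : ∀ x, x ∈ O ↔ ∃ a b : ℤ, x = a + b * g) (I : Ideal O) : ∃ c d, I = Ideal.span {c, d} := by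
  obtain ⟨v, hv⟩ := exists_span_int_range_eq_top_of_forall_mem_iff hO
  obtain ⟨w, rfl⟩ := exists_idealSpan_range_eq hv I
  exact ⟨w 0, w 1, congrArg Ideal.span (by ext; simp [eq_comm])⟩

theorem hasAlmostStableRangeOne_of_forall_mem_iff [IsDomain O]
    (hO : ∀ x, x ∈ O ↔ ∃ a b : ℤ, x = a + b * g) : HasAlmostStableRangeOne O := by
  obtain ⟨v, hv⟩ := exists_span_int_range_eq_top_of_forall_mem_iff hO
  have : Module.Finite ℤ O := ⟨hv ▸ Submodule.fg_span (finite_range v)⟩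
  exact hasAlmostStableRangeOne_of_hasFiniteQuotients O

end QuadraticOrder

/-- Let `O = 𝒪_f = ℤ + ℤfω` be an order in a quadratic number field
`K = ℚ(√m)` and `I` an ideal of `O`.  For every `n > 2`, `SLₙ(O)` acts transitively on
the set `Vₙ(I)` of generating vectors of `I` of length `n`. -/
theorem order_sl_transitive (m : ℤ) (hm : Squarefree m) (hm1 : m ≠ 1)
    (K : Type*) [Field K] [Algebra ℚ K] (sqm : K) (hsqm : sqm ^ 2 = (m : K))
    (hbasis : ∀ x : K, ∃! c : ℚ × ℚ,
      x = algebraMap ℚ K c.1 + algebraMap ℚ K c.2 * sqm)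
    (ω : K) (hω : ω = if m % 4 = 1 then (1 + sqm) / 2 else sqm)
    (f : ℕ) (hf : 0 < f)
    (O : Subring K) (hO : ∀ x : K, x ∈ O ↔ ∃ a b : ℤ, x = a + b * ((f : K) * ω))
    (I : Ideal O) (n : ℕ) (hn : 2 < n)
    (v w : Fin n → O)
    (hv : Ideal.span (Set.range v) = I) (hw : Ideal.span (Set.range w) = I) :
    ∃ σ : Matrix.SpecialLinearGroup (Fin n) O,
      ∀ j, w j = ∑ i, (σ : Matrix (Fin n) (Fin n) O) i j * v i := by
  exact order_sl_transitive_general (hasAlmostStableRangeOne_of_forall_mem_iff hO)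
    (exists_eq_idealSpan_pair_of_forall_mem_iff hO I) (by simpa using hn) hv hw
end

section
/- Let S = R[x,y] be the polynomial ring in two variables over a commutative ring R and I = Sx + Sy. Then Fitt₁(I) = I, and the determinant map induces a bijection V₂(I)/SL₂(S) ≅ R^×; in particular the SL₂(S)-orbits of generating pairs of I are in natural bijection with the units of R. -/
/-!
Two matrices carrying a generating pair `v` of `I` to the same pair differ by relations of `v`, so
their determinants agree modulo `Fitt₁(I)`. Conversely, adding to a matrix `A` a multiple of the
Koszul relation `(v 1, -v 0)` leaves `v ᵥ* A` unchanged and shifts `det A` by an arbitrary element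
of the ideal generated by `v ᵥ* A`. So if `Fitt₁(I) = I`, a transition matrix between two
generating pairs whose determinant is `1` modulo `I` can be corrected to one of determinant `1`.
The equality `Fitt₁(I) = I` holds for pairs that form a regular sequence, such as two variables.
-/

open Matrix MvPolynomial RingTheory.Sequence

theorem range_fin_two {α : Type*} (v : Fin 2 → α) : Set.range v = {v 0, v 1} := by
  ext
  simp [eq_comm]

section VecMul

variable {S m n : Type*} [CommRing S] [Fintype m]

theorem eq_vecMul_iff_forall_eq_sum {v : m → S} {w : n → S} {A : Matrix m n S} :
    w = v ᵥ* A ↔ ∀ j, w j = ∑ i, A i j * v i := by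
  simp only [funext_iff, vecMul, dotProduct, mul_comm]

theorem span_range_le_span_range_iff_exists_eq_vecMul {v : m → S} {w : n → S} :
    Ideal.span (Set.range w) ≤ Ideal.span (Set.range v) ↔ ∃ A : Matrix m n S, w = v ᵥ* A := by
  simp only [Ideal.span_le, Set.range_subset_iff, SetLike.mem_coe,
    Ideal.mem_span_range_iff_exists_fun, Classical.skolem, eq_vecMul_iff_forall_eq_sum]
  exact ⟨fun ⟨c, hc⟩ => ⟨fun i j => c j i, fun j => (hc j).symm⟩,
    fun ⟨A, hA⟩ => ⟨fun j i => A i j, fun j => (hA j).symm⟩⟩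

theorem span_range_vecMul_eq_of_isUnit_det [DecidableEq m] (v : m → S) {A : Matrix m m S}
    (hA : IsUnit A.det) : Ideal.span (Set.range (v ᵥ* A)) = Ideal.span (Set.range v) :=
  le_antisymm (span_range_le_span_range_iff_exists_eq_vecMul.2 ⟨A, rfl⟩)
    (span_range_le_span_range_iff_exists_eq_vecMul.2
      ⟨A⁻¹, by rw [vecMul_vecMul, mul_nonsing_inv A hA, vecMul_one]⟩)

theorem det_sub_det_mem_of_forall_sub_mem [DecidableEq m] {J : Ideal S} {A B : Matrix m m S}
    (h : ∀ i j, A i j - B i j ∈ J) : A.det - B.det ∈ J := by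
  have hmap : A.map (Ideal.Quotient.mk J) = B.map (Ideal.Quotient.mk J) :=
    Matrix.ext fun i j => Ideal.Quotient.eq.2 (h i j)
  rw [← Ideal.Quotient.eq, RingHom.map_det, RingHom.map_det]
  exact congrArg det hmap

end VecMul

section RelFittingIdeal

variable {S : Type*} [CommRing S]

theorem span_pair_le_relFittingIdeal (a b : S) : Ideal.span {a, b} ≤ relFittingIdeal a b :=
  Ideal.span_le.2 <| Set.pair_subset
    (Ideal.subset_span (Or.inr ⟨-b, by ring⟩)) (Ideal.subset_span (Or.inl ⟨-a, by ring⟩))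

theorem relFittingIdeal_eq_span_pair_of_isWeaklyRegular {a b : S}
    (h : IsWeaklyRegular S [a, b]) : relFittingIdeal a b = Ideal.span {a, b} := by
  obtain ⟨ha, hb⟩ := (isWeaklyRegular_cons_iff S a [b]).1 h
  have hb' : ∀ s, a ∣ b * s → a ∣ s := by
    simpa [isSMulRegular_quotient_iff_mem_of_smul_mem, Submodule.mem_smul_pointwise_iff_exists,
      dvd_def, eq_comm] using hb
  have relation : ∀ r s, r * a + s * b = 0 → r ∈ Ideal.span {a, b} ∧ s ∈ Ideal.span {a, b} := by
    intro r s hrs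
    obtain ⟨t, rfl⟩ := hb' s ⟨-r, by linear_combination hrs⟩
    have hr : r = -t * b := ha (by simp only [smul_eq_mul]; linear_combination hrs)
    exact ⟨Ideal.mem_span_pair.2 ⟨0, -t, by simp [hr]⟩, Ideal.mem_span_pair.2 ⟨t, 0, by ring⟩⟩
  refine le_antisymm (Ideal.span_le.2 ?_) (span_pair_le_relFittingIdeal a b)
  rintro r (⟨s, hrs⟩ | ⟨s, hsr⟩)
  · exact (relation r s hrs).1
  · exact (relation s r hsr).2

variable {v : Fin 2 → S} {A B : Matrix (Fin 2) (Fin 2) S}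

theorem mem_relFittingIdeal_of_dotProduct_eq_zero {c : Fin 2 → S} (h : v ⬝ᵥ c = 0) (i : Fin 2) :
    c i ∈ relFittingIdeal (v 0) (v 1) := by
  rw [dotProduct_comm, dotProduct, Fin.sum_univ_two] at h
  fin_cases i
  · exact Ideal.subset_span (Or.inl ⟨c 1, h⟩)
  · exact Ideal.subset_span (Or.inr ⟨c 0, h⟩)

theorem det_sub_det_mem_relFittingIdeal_of_vecMul_eq (h : v ᵥ* A = v ᵥ* B) :
    A.det - B.det ∈ relFittingIdeal (v 0) (v 1) := by
  have hsub : v ᵥ* (A - B) = 0 := by rw [vecMul_sub, h, sub_self]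
  exact det_sub_det_mem_of_forall_sub_mem fun i j =>
    mem_relFittingIdeal_of_dotProduct_eq_zero (c := fun i => (A - B) i j) (congrFun hsub j) i

theorem exists_vecMul_eq_and_det_eq_add {δ : S} (hδ : δ ∈ Ideal.span (Set.range (v ᵥ* A))) :
    ∃ B : Matrix (Fin 2) (Fin 2) S, v ᵥ* B = v ᵥ* A ∧ B.det = A.det + δ := by
  obtain ⟨c, rfl⟩ := Ideal.mem_span_range_iff_exists_fun.1 hδ
  refine ⟨A + vecMulVec ![v 1, -v 0] ![c 1, -c 0], ?_, ?_⟩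
  · rw [vecMul_add, vecMul_vecMulVec]
    simp [dotProduct, mul_comm]
  · simp only [det_fin_two, Matrix.add_apply, vecMulVec_apply, cons_val_zero, cons_val_one,
      vecMul, dotProduct, Fin.sum_univ_two]
    ring

theorem exists_specialLinearGroup_vecMul_eq
    (hJ : relFittingIdeal (v 0) (v 1) ≤ Ideal.span (Set.range v))
    (hA : Ideal.span (Set.range v) ≤ Ideal.span (Set.range (v ᵥ* A)))
    (hB : Ideal.span (Set.range v) ≤ Ideal.span (Set.range (v ᵥ* B)))
    (hdet : A.det - B.det ∈ Ideal.span (Set.range v)) :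
    ∃ σ : SpecialLinearGroup (Fin 2) S, v ᵥ* B = v ᵥ* A ᵥ* (σ : Matrix (Fin 2) (Fin 2) S) := by
  obtain ⟨C, hC⟩ := span_range_le_span_range_iff_exists_eq_vecMul.1 hA
  have hAC : A.det * C.det - 1 ∈ Ideal.span (Set.range v) := by
    simpa only [det_mul, det_one] using hJ <| det_sub_det_mem_relFittingIdeal_of_vecMul_eq
      (A := A * C) (B := 1) (by rw [← vecMul_vecMul, ← hC, vecMul_one])
  have hCB : v ᵥ* A ᵥ* (C * B) = v ᵥ* B := by rw [← vecMul_vecMul, ← hC]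
  have hδ : 1 - (C * B).det ∈ Ideal.span (Set.range v) := by
    have hsplit : 1 - (C * B).det = C.det * (A.det - B.det) - (A.det * C.det - 1) := by
      rw [det_mul]
      ring
    exact hsplit ▸ sub_mem (Ideal.mul_mem_left _ C.det hdet) hAC
  obtain ⟨D, hD, hDdet⟩ := exists_vecMul_eq_and_det_eq_add (hCB ▸ hB hδ)
  exact ⟨⟨D, by rw [hDdet, add_sub_cancel]⟩, (hD.trans hCB).symm⟩

theorem det_sub_det_mem_relFittingIdeal_of_specialLinearGroup
    {σ : SpecialLinearGroup (Fin 2) S}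
    (h : v ᵥ* B = v ᵥ* A ᵥ* (σ : Matrix (Fin 2) (Fin 2) S)) :
    A.det - B.det ∈ relFittingIdeal (v 0) (v 1) := by
  have hdet : (A * (σ : Matrix (Fin 2) (Fin 2) S)).det = A.det := by
    rw [det_mul, σ.det_coe, mul_one]
  rw [← hdet]
  exact det_sub_det_mem_relFittingIdeal_of_vecMul_eq (by rw [← vecMul_vecMul, h])

theorem polynomial_two_variables_fitting_general (hv : IsWeaklyRegular S [v 0, v 1]) :
    relFittingIdeal (v 0) (v 1) = Ideal.span (Set.range v) ∧
    (∀ w : Fin 2 → S, Ideal.span (Set.range w) = Ideal.span (Set.range v) →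
      ∃ A : Matrix (Fin 2) (Fin 2) S, w = v ᵥ* A) ∧
    (∀ (w w' : Fin 2 → S) (A A' : Matrix (Fin 2) (Fin 2) S),
      Ideal.span (Set.range w) = Ideal.span (Set.range v) →
      Ideal.span (Set.range w') = Ideal.span (Set.range v) →
      w = v ᵥ* A → w' = v ᵥ* A' →
      (A.det - A'.det ∈ Ideal.span (Set.range v) ↔
        ∃ σ : SpecialLinearGroup (Fin 2) S, w' = w ᵥ* (σ : Matrix (Fin 2) (Fin 2) S))) ∧
    (∀ u : Sˣ, ∃ (w : Fin 2 → S) (A : Matrix (Fin 2) (Fin 2) S),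
      Ideal.span (Set.range w) = Ideal.span (Set.range v) ∧ w = v ᵥ* A ∧
      A.det - u ∈ Ideal.span (Set.range v)) := by
  have fitting : relFittingIdeal (v 0) (v 1) = Ideal.span (Set.range v) := by
    rw [range_fin_two, relFittingIdeal_eq_span_pair_of_isWeaklyRegular hv]
  refine ⟨fitting, fun w hw => span_range_le_span_range_iff_exists_eq_vecMul.1 hw.le, ?_, ?_⟩
  · rintro _ _ A A' hw hw' rfl rfl
    refine ⟨exists_specialLinearGroup_vecMul_eq fitting.le hw.ge hw'.ge, ?_⟩
    rintro ⟨σ, hσ⟩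
    exact fitting.le (det_sub_det_mem_relFittingIdeal_of_specialLinearGroup hσ)
  · exact fun u => ⟨_, diagonal ![1, (u : S)],
      span_range_vecMul_eq_of_isUnit_det v (by simp), rfl, by simp⟩

end RelFittingIdeal

section Variables

variable {σ R : Type*} [CommRing R]

theorem mem_span_X_image_of_X_mul_mem {s : Set σ} {i : σ} (hi : i ∉ s) {p : MvPolynomial σ R}
    (h : X i * p ∈ Ideal.span ((X : σ → MvPolynomial σ R) '' s)) :
    p ∈ Ideal.span ((X : σ → MvPolynomial σ R) '' s) := by
  classical
  rw [mem_ideal_span_X_image] at h ⊢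
  intro d hd
  obtain ⟨j, hj, hne⟩ := h (Finsupp.single i 1 + d) (by simpa [support_X_mul] using hd)
  have hij : i ≠ j := fun hij => hi (hij ▸ hj)
  exact ⟨j, hj, by simpa [Finsupp.single_eq_of_ne' hij] using hne⟩

theorem isWeaklyRegular_map_X {l : List σ} (hl : l.Nodup) :
    IsWeaklyRegular (MvPolynomial σ R) (l.map (X : σ → MvPolynomial σ R)) := by
  refine ⟨fun k hk => ?_⟩
  have hk' : k < l.length := by simpa using hk
  have hspan : Ideal.ofList ((l.map (X : σ → MvPolynomial σ R)).take k) =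
      Ideal.span (X '' {i | i ∈ l.take k}) := by
    rw [Ideal.ofList, ← List.map_take]
    congr 1
    ext
    simp only [Set.mem_ofPred_eq, List.mem_map, Set.mem_image]
  have hnotMem : l[k] ∉ {i | i ∈ l.take k} := by
    simp only [Set.mem_ofPred_eq, List.mem_take_iff_getElem, not_exists]
    intro j hj hjk
    have hjk' : j = k := hl.getElem_inj_iff.1 hjk
    omega
  rw [isSMulRegular_quotient_iff_mem_of_smul_mem, smul_eq_mul, Ideal.mul_top, hspan,
    List.getElem_map]
  exact fun p => mem_span_X_image_of_X_mul_mem hnotMem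

end Variables

/-- Let `S = R[x,y]` and `I = Sx + Sy`.  Then `Fitt₁(I) = I`, and the
determinant map induces a bijection `V₂(I)/SL₂(S) ≃ Rˣ`: every generating pair of `I` is
the image of `(x, y)` under a matrix; two generating pairs are `SL₂(S)`-equivalent iff
the determinants of their transition matrices agree mod `I`; and every unit of `R` is
attained as such a determinant mod `I`. -/
theorem polynomial_two_variables_fitting {R : Type*} [CommRing R] :
    relFittingIdeal (MvPolynomial.X 0 : MvPolynomial (Fin 2) R) (MvPolynomial.X 1) =
      Ideal.span {(MvPolynomial.X 0 : MvPolynomial (Fin 2) R), MvPolynomial.X 1} ∧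
    (∀ w : Fin 2 → MvPolynomial (Fin 2) R,
      Ideal.span {w 0, w 1} =
        Ideal.span {(MvPolynomial.X 0 : MvPolynomial (Fin 2) R), MvPolynomial.X 1} →
      ∃ A : Matrix (Fin 2) (Fin 2) (MvPolynomial (Fin 2) R),
        ∀ j, w j = ∑ i, A i j * ![MvPolynomial.X 0, MvPolynomial.X 1] i) ∧
    (∀ (w w' : Fin 2 → MvPolynomial (Fin 2) R)
        (A A' : Matrix (Fin 2) (Fin 2) (MvPolynomial (Fin 2) R)),
      Ideal.span {w 0, w 1} =
        Ideal.span {(MvPolynomial.X 0 : MvPolynomial (Fin 2) R), MvPolynomial.X 1} →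
      Ideal.span {w' 0, w' 1} =
        Ideal.span {(MvPolynomial.X 0 : MvPolynomial (Fin 2) R), MvPolynomial.X 1} →
      (∀ j, w j = ∑ i, A i j * ![MvPolynomial.X 0, MvPolynomial.X 1] i) →
      (∀ j, w' j = ∑ i, A' i j * ![MvPolynomial.X 0, MvPolynomial.X 1] i) →
      ((A.det - A'.det ∈
          Ideal.span {(MvPolynomial.X 0 : MvPolynomial (Fin 2) R), MvPolynomial.X 1}) ↔
        ∃ σ : Matrix.SpecialLinearGroup (Fin 2) (MvPolynomial (Fin 2) R),
          ∀ j, w' j = ∑ i, (σ : Matrix (Fin 2) (Fin 2) (MvPolynomial (Fin 2) R)) i j * w i)) ∧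
    (∀ u : Rˣ, ∃ (w : Fin 2 → MvPolynomial (Fin 2) R)
        (A : Matrix (Fin 2) (Fin 2) (MvPolynomial (Fin 2) R)),
      Ideal.span {w 0, w 1} =
        Ideal.span {(MvPolynomial.X 0 : MvPolynomial (Fin 2) R), MvPolynomial.X 1} ∧
      (∀ j, w j = ∑ i, A i j * ![MvPolynomial.X 0, MvPolynomial.X 1] i) ∧
      A.det - MvPolynomial.C (u : R) ∈
        Ideal.span {(MvPolynomial.X 0 : MvPolynomial (Fin 2) R), MvPolynomial.X 1}) := by
  obtain ⟨fitting, transition, orbits, units⟩ := polynomial_two_variables_fitting_general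
    (v := ![(X 0 : MvPolynomial (Fin 2) R), X 1])
    (isWeaklyRegular_map_X (l := [(0 : Fin 2), 1]) (by simp))
  simp only [range_fin_two, eq_vecMul_iff_forall_eq_sum] at fitting transition orbits units
  exact ⟨fitting, transition, orbits, fun u => units (u.map C.toMonoidHom)⟩
end
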